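/- Let α ∈ (1/3, 1/2), c₁, c₂ > 0, and let I be a bounded interval of ℝ₊. With q_n = n^α and b_n = n^α c_n where c_{2n-1} = c₁, c_{2n} = c₂, and with F_n(λ) the Poincaré coefficient F_n(λ) = (q_{2n+2}−λ)b_{2n}²/((q_{2n}−λ)b_{2n+1}b_{2n+2}) − (q_{2n+1}−λ)(q_{2n+2}−λ)/(b_{2n+1}b_{2n+2}) + b_{2n+1}/b_{2n+2}, assuming |c₁ − c₂| = 1, one has the uniform expansion F_n(λ) = 2 + (2^{1-α}/(c₁c₂))·λ·n^{-α} − (2^{-2α}/(c₁c₂))·λ²·n^{-2α} − (α/n)·(1 + 1/(2c₁c₂)) + Õ_I(n^{-1-α}) as n → ∞. -/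

import Mathlib

/-- Uniform big-O on `I`: `r_n(λ) = Õ_I(h_n)`. -/
def OtildeI (I : Set ℝ) (r : ℕ → ℝ → ℝ) (h : ℕ → ℝ) : Prop :=
  ∃ C > (0 : ℝ), ∃ N : ℕ, ∀ n > N, ∀ t ∈ I, |r n t| ≤ C * |h n|

/-- The 2-periodically modulated weights `b_n = n^α c_n`, `c_{2n-1} = c₁`, `c_{2n} = c₂`. -/
noncomputable def jacobiWeight (α c₁ c₂ : ℝ) (n : ℕ) : ℝ :=
  (n : ℝ) ^ α * (if Odd n then c₁ else c₂)

/-- The diagonal `q_n = n^α`. -/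
noncomputable def jacobiDiag (α : ℝ) (n : ℕ) : ℝ := (n : ℝ) ^ α

/-- The Poincaré coefficient `F_n(λ)`. -/
noncomputable def jacobiF (b q : ℕ → ℝ) (n : ℕ) (t : ℝ) : ℝ :=
  (q (2 * n + 2) - t) * (b (2 * n)) ^ 2 / ((q (2 * n) - t) * b (2 * n + 1) * b (2 * n + 2)) -
    (q (2 * n + 1) - t) * (q (2 * n + 2) - t) / (b (2 * n + 1) * b (2 * n + 2)) +
    b (2 * n + 1) / b (2 * n + 2)

/-! The ratios `ρⱼ = q₂ₙ / q₂ₙ₊ⱼ` satisfy `ρⱼ = 1 - j d + O(d²)` with `d = α / (2n)`, by the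
binomial series. In terms of `s = λ / q₂ₙ`, which is `O(n^(-α))` uniformly on bounded sets, the
coefficient is
`(c₂ / c₁) ρ₁ (1 - s ρ₂) / (1 - s) - (1 - s ρ₁) (1 - s ρ₂) / (c₁ c₂) + (c₁ / c₂) ρ₂ / ρ₁`.
Both `ρ₁` and `ρ₂ / ρ₁` are `1 - d` up to `O(d²)`, and replacing `s ρⱼ` by `s` costs only `O(s d)`.
What remains is `(c₂ / c₁ + c₁ / c₂) (1 - d) - (1 - s)² / (c₁ c₂)`. -/

open Asymptotics Filter Topology

theorem sq_add_sq_of_abs_sub_eq_one {a b : ℝ} (h : |a - b| = 1) :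
    a ^ 2 + b ^ 2 = 2 * a * b + 1 := by
  have hsq : (a - b) ^ 2 = 1 := by rw [← sq_abs, h, one_pow]
  linear_combination hsq

theorem sq_add_sq_sub_one_div_mul_of_abs_sub_eq_one {a b : ℝ} (ha : a ≠ 0) (hb : b ≠ 0)
    (h : |a - b| = 1) : (a ^ 2 + b ^ 2 - 1) / (a * b) = 2 := by
  rw [sq_add_sq_of_abs_sub_eq_one h]
  field_simp
  ring

theorem sq_add_sq_div_two_mul_of_abs_sub_eq_one {a b : ℝ} (ha : a ≠ 0) (hb : b ≠ 0)
    (h : |a - b| = 1) : (a ^ 2 + b ^ 2) / (2 * a * b) = 1 + 1 / (2 * a * b) := by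
  rw [sq_add_sq_of_abs_sub_eq_one h]
  field_simp

theorem otildeI_iff_isBigO {I : Set ℝ} {r : ℕ → ℝ → ℝ} {h : ℕ → ℝ} :
    OtildeI I r h ↔
      (fun p : ℕ × ℝ => r p.1 p.2) =O[atTop ×ˢ 𝓟 I] fun p : ℕ × ℝ => h p.1 := by
  simp only [OtildeI, isBigO_iff', eventually_prod_principal_iff, atTop_basis_Ioi.eventually_iff,
    true_and, Set.mem_Ioi, Real.norm_eq_abs, gt_iff_lt]

theorem isBigO_snd_one_of_isBounded {ι E : Type*} [SeminormedAddCommGroup E] {l : Filter ι}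
    {I : Set E} (hI : Bornology.IsBounded I) :
    (fun p : ι × E => p.2) =O[l ×ˢ 𝓟 I] fun _ => (1 : ℝ) := by
  obtain ⟨M, hM⟩ := hI.exists_norm_le
  refine IsBigO.of_bound M (eventually_prod_principal_iff.2 (.of_forall fun _ t ht => ?_))
  simpa using hM t ht

theorem isBigO_inv_rpow_mul_inv_atTop {a b : ℝ} (hba : b ≤ a) :
    (fun x : ℝ => (x ^ a)⁻¹ * x⁻¹) =O[atTop] fun x => x ^ (-1 - b) := by
  refine IsBigO.of_norm_eventuallyLE ?_
  filter_upwards [eventually_ge_atTop 1] with x hx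
  have hx₀ : 0 < x := by linarith
  calc ‖(x ^ a)⁻¹ * x⁻¹‖ = x ^ (-1 - a) := by
        rw [Real.norm_of_nonneg (by positivity), sub_eq_neg_add, Real.rpow_add hx₀,
          Real.rpow_neg hx₀.le, Real.rpow_neg_one]
    _ ≤ x ^ (-1 - b) := Real.rpow_le_rpow_of_exponent_le hx (by linarith)

theorem isBigO_one_add_rpow_sub (a : ℝ) :
    (fun x : ℝ => (1 + x) ^ a - (1 + a * x)) =O[𝓝 0] fun x => x ^ 2 := by
  have h := (Real.one_add_rpow_hasFPowerSeriesAt_zero (a := a)).isBigO_sub_partialSum_pow 2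
  simpa [FormalMultilinearSeries.partialSum, Finset.sum_range_succ, binomialSeries,
    FormalMultilinearSeries.coeff_ofScalars, mul_comm a] using h

theorem isBigO_rpow_div_add_rpow_sub (a k : ℝ) :
    (fun x : ℝ => x ^ a / (x + k) ^ a - (1 - k * (a / x))) =O[atTop] fun x => x⁻¹ ^ 2 := by
  have hlim : Tendsto (fun x : ℝ => k / x) atTop (𝓝 0) := tendsto_const_nhds.div_atTop tendsto_id
  have hsq : (fun x : ℝ => (k / x) ^ 2) =O[atTop] fun x => x⁻¹ ^ 2 := by
    simpa only [div_eq_mul_inv, mul_pow] using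
      isBigO_const_mul_self (k ^ 2) (fun x : ℝ => x⁻¹ ^ 2) atTop
  refine (((isBigO_one_add_rpow_sub (-a)).comp_tendsto hlim).congr' ?_ .rfl).trans hsq
  filter_upwards [eventually_gt_atTop 0, eventually_gt_atTop (-k)] with x hx hxk
  have hxk' : 0 < x + k := by linarith
  have hadd : 1 + k / x = (x + k) / x := by field_simp
  simp only [Function.comp_apply]
  rw [hadd, Real.rpow_neg (by positivity), Real.div_rpow hxk'.le hx.le, inv_div]
  ring

/-- The Poincaré coefficient of the weights `bₘ = qₘ c₁` (`m` odd), `bₘ = qₘ c₂` (`m` even), written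
in the scale-free variables `s = λ / q₂ₙ` and `ρⱼ = q₂ₙ / q₂ₙ₊ⱼ`. -/
noncomputable def scaledPoincareCoeff (c₁ c₂ s ρ₁ ρ₂ : ℝ) : ℝ :=
  c₂ / c₁ * (ρ₁ * (1 - s * ρ₂) / (1 - s)) - (1 - s * ρ₁) * (1 - s * ρ₂) / (c₁ * c₂) +
    c₁ / c₂ * (ρ₂ / ρ₁)

theorem jacobiF_eq_scaledPoincareCoeff (c₁ c₂ t : ℝ) {q : ℕ → ℝ} {n : ℕ} (h₀ : q (2 * n) ≠ 0)
    (h₁ : q (2 * n + 1) ≠ 0) (h₂ : q (2 * n + 2) ≠ 0) :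
    jacobiF (fun m => q m * if Odd m then c₁ else c₂) q n t =
      scaledPoincareCoeff c₁ c₂ (t / q (2 * n)) (q (2 * n) / q (2 * n + 1))
        (q (2 * n) / q (2 * n + 2)) := by
  have hodd : Odd (2 * n + 1) := odd_two_mul_add_one n
  have heven : ¬Odd (2 * n) := by simp
  have heven' : ¬Odd (2 * n + 2) := by simp [Nat.odd_add]
  simp only [jacobiF, scaledPoincareCoeff, if_pos hodd, if_neg heven, if_neg heven']
  rw [one_sub_div h₀]
  field_simp

theorem jacobiF_jacobiWeight_eq_scaledPoincareCoeff (α c₁ c₂ t : ℝ) {n : ℕ} (hn : n ≠ 0) :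
    jacobiF (jacobiWeight α c₁ c₂) (jacobiDiag α) n t =
      scaledPoincareCoeff c₁ c₂ (t / (2 * n : ℝ) ^ α)
        ((2 * n : ℝ) ^ α / (2 * n + 1 : ℝ) ^ α) ((2 * n : ℝ) ^ α / (2 * n + 2 : ℝ) ^ α) := by
  have hq (m : ℕ) (hm : m ≠ 0) : jacobiDiag α m ≠ 0 := by
    unfold jacobiDiag
    positivity
  have h : jacobiF (jacobiWeight α c₁ c₂) (jacobiDiag α) n t = _ :=
    jacobiF_eq_scaledPoincareCoeff c₁ c₂ t (hq (2 * n) (by simpa)) (hq (2 * n + 1) (by simp))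
      (hq (2 * n + 2) (by simp))
  simpa [jacobiDiag] using h

section PerturbedRatios

variable {ι : Type*} {l : Filter ι} {s d ρ ρ₁ ρ₂ e : ι → ℝ}

theorem tendsto_one_of_isBigO_sub (he : Tendsto e l (𝓝 0)) (hd : Tendsto d l (𝓝 0))
    (hρ : (fun i => ρ i - (1 - d i)) =O[l] e) : Tendsto ρ l (𝓝 1) := by
  simpa using (hρ.trans_tendsto he).add (hd.const_sub 1)

theorem isBigO_mul_one_sub (hs : Tendsto s l (𝓝 0)) (hsd : (fun i => s i * d i) =O[l] e)
    (hρ : (fun i => ρ i - (1 - d i)) =O[l] e) : (fun i => s i * (1 - ρ i)) =O[l] e := by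
  have h : (fun i => s i * (ρ i - (1 - d i))) =O[l] e := by
    simpa using (hs.isBigO_one ℝ).mul hρ
  exact (hsd.sub h).congr_left fun i => by ring

theorem isBigO_mul_one_sub_div_sub (hs : Tendsto s l (𝓝 0)) (hρ₁_lim : Tendsto ρ₁ l (𝓝 1))
    (hρ₁ : (fun i => ρ₁ i - (1 - d i)) =O[l] e) (hρ₂ : (fun i => s i * (1 - ρ₂ i)) =O[l] e) :
    (fun i => ρ₁ i * (1 - s i * ρ₂ i) / (1 - s i) - (1 - d i)) =O[l] e := by
  have hfactor : (fun i => ρ₁ i / (1 - s i)) =O[l] fun _ => (1 : ℝ) :=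
    (hρ₁_lim.div (hs.const_sub 1) (by simp)).isBigO_one ℝ
  have h : (fun i => ρ₁ i / (1 - s i) * (s i * (1 - ρ₂ i))) =O[l] e := by
    simpa using hfactor.mul hρ₂
  refine (hρ₁.add h).congr' ?_ .rfl
  filter_upwards [hs.eventually_ne zero_ne_one] with i hi
  have : 1 - s i ≠ 0 := sub_ne_zero.2 hi.symm
  field_simp
  ring

theorem isBigO_one_sub_mul_one_sub_sub_sq (he : Tendsto e l (𝓝 0)) (hs : Tendsto s l (𝓝 0))
    (hρ₁ : (fun i => s i * (1 - ρ₁ i)) =O[l] e) (hρ₂ : (fun i => s i * (1 - ρ₂ i)) =O[l] e) :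
    (fun i => (1 - s i * ρ₁ i) * (1 - s i * ρ₂ i) - (1 - s i) ^ 2) =O[l] e := by
  have hlin : (fun i => (1 - s i) * (s i * (1 - ρ₁ i) + s i * (1 - ρ₂ i))) =O[l] e := by
    simpa using ((hs.const_sub 1).isBigO_one ℝ).mul (hρ₁.add hρ₂)
  have hquad : (fun i => s i * (1 - ρ₁ i) * (s i * (1 - ρ₂ i))) =O[l] e := by
    simpa using ((hρ₁.trans_tendsto he).isBigO_one ℝ).mul hρ₂
  exact (hlin.add hquad).congr_left fun i => by ring

theorem isBigO_div_sub_one_sub (hd : Tendsto d l (𝓝 0)) (hdd : (fun i => d i * d i) =O[l] e)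
    (hρ₁_lim : Tendsto ρ₁ l (𝓝 1)) (hρ₁ : (fun i => ρ₁ i - (1 - d i)) =O[l] e)
    (hρ₂ : (fun i => ρ₂ i - (1 - 2 * d i)) =O[l] e) :
    (fun i => ρ₂ i / ρ₁ i - (1 - d i)) =O[l] e := by
  have hcross : (fun i => (1 - d i) * (ρ₁ i - (1 - d i))) =O[l] e := by
    simpa using ((hd.const_sub 1).isBigO_one ℝ).mul hρ₁
  have h := ((hρ₁_lim.inv₀ one_ne_zero).isBigO_one ℝ).mul ((hρ₂.sub hcross).sub hdd)
  simp only [one_mul] at h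
  refine h.congr' ?_ .rfl
  filter_upwards [hρ₁_lim.eventually_ne one_ne_zero] with i hi
  field_simp
  ring

theorem isBigO_scaledPoincareCoeff_sub (c₁ c₂ : ℝ) (he : Tendsto e l (𝓝 0))
    (hs : Tendsto s l (𝓝 0)) (hd : Tendsto d l (𝓝 0)) (hdd : (fun i => d i * d i) =O[l] e)
    (hsd : (fun i => s i * d i) =O[l] e) (hρ₁ : (fun i => ρ₁ i - (1 - d i)) =O[l] e)
    (hρ₂ : (fun i => ρ₂ i - (1 - 2 * d i)) =O[l] e) :
    (fun i => scaledPoincareCoeff c₁ c₂ (s i) (ρ₁ i) (ρ₂ i) -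
      ((c₂ / c₁ + c₁ / c₂) * (1 - d i) - (1 - s i) ^ 2 / (c₁ * c₂))) =O[l] e := by
  have hρ₁_lim : Tendsto ρ₁ l (𝓝 1) := tendsto_one_of_isBigO_sub he hd hρ₁
  have hsρ₁ := isBigO_mul_one_sub hs hsd hρ₁
  have hsρ₂ := isBigO_mul_one_sub hs ((hsd.const_mul_left 2).congr_left fun i => by ring) hρ₂
  have hfirst := isBigO_mul_one_sub_div_sub hs hρ₁_lim hρ₁ hsρ₂
  have hmiddle := isBigO_one_sub_mul_one_sub_sub_sq he hs hsρ₁ hsρ₂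
  have hlast := isBigO_div_sub_one_sub hd hdd hρ₁_lim hρ₁ hρ₂
  refine (((hfirst.const_mul_left (c₂ / c₁)).sub (hmiddle.const_mul_left (1 / (c₁ * c₂)))).add
    (hlast.const_mul_left (c₁ / c₂))).congr_left fun i => ?_
  rw [scaledPoincareCoeff]
  ring

end PerturbedRatios

theorem isBigO_scaledPoincareCoeff_rpow_sub {α : ℝ} (hα : 0 < α) (c₁ c₂ : ℝ) {I : Set ℝ}
    (hI : Bornology.IsBounded I) :
    (fun p : ℝ × ℝ =>
      scaledPoincareCoeff c₁ c₂ (p.2 / p.1 ^ α) (p.1 ^ α / (p.1 + 1) ^ α)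
          (p.1 ^ α / (p.1 + 2) ^ α) -
        ((c₂ / c₁ + c₁ / c₂) * (1 - α / p.1) - (1 - p.2 / p.1 ^ α) ^ 2 / (c₁ * c₂)))
      =O[atTop ×ˢ 𝓟 I] fun p => p.1 ^ (-1 - min α 1) := by
  have hfst : Tendsto Prod.fst ((atTop : Filter ℝ) ×ˢ 𝓟 I) atTop := tendsto_fst
  have hs : (fun p : ℝ × ℝ => p.2 / p.1 ^ α) =O[atTop ×ˢ 𝓟 I] fun p => (p.1 ^ α)⁻¹ := by
    simpa [div_eq_mul_inv] using (isBigO_snd_one_of_isBounded hI).mul (isBigO_refl _ _)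
  have hs_lim := hs.trans_tendsto ((tendsto_rpow_atTop hα).comp hfst).inv_tendsto_atTop
  have hd_lim : Tendsto (fun x : ℝ => α / x) atTop (𝓝 0) :=
    tendsto_const_nhds.div_atTop tendsto_id
  have hd : (fun x : ℝ => α / x) =O[atTop] fun x => x⁻¹ := by
    simpa [div_eq_mul_inv] using isBigO_const_mul_self α (fun x : ℝ => x⁻¹) atTop
  have he_lim : Tendsto (fun x : ℝ => x ^ (-1 - min α 1)) atTop (𝓝 0) := by
    simpa only [neg_add'] using tendsto_rpow_neg_atTop (y := 1 + min α 1) (by positivity)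
  have he : (fun x : ℝ => x⁻¹ ^ 2) =O[atTop] fun x => x ^ (-1 - min α 1) := by
    simpa only [Real.rpow_one, sq] using isBigO_inv_rpow_mul_inv_atTop (min_le_right α 1)
  have hdd : (fun x : ℝ => α / x * (α / x)) =O[atTop] fun x => x ^ (-1 - min α 1) :=
    ((hd.mul hd).congr_right fun x => (sq x⁻¹).symm).trans he
  have hsd := (hs.mul (hd.comp_tendsto hfst)).trans
    ((isBigO_inv_rpow_mul_inv_atTop (min_le_left α 1)).comp_tendsto hfst)
  have hρ (k : ℝ) := ((isBigO_rpow_div_add_rpow_sub α k).trans he).comp_tendsto hfst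
  exact isBigO_scaledPoincareCoeff_sub c₁ c₂ (he_lim.comp hfst) hs_lim (hd_lim.comp hfst)
    (hdd.comp_tendsto hfst) hsd ((hρ 1).congr_left fun p => by simp) (hρ 2)

theorem leading_terms_two_mul_eq {c₁ c₂ : ℝ} (hc₁ : c₁ ≠ 0) (hc₂ : c₂ ≠ 0) (α t : ℝ) {x : ℝ}
    (hx : 0 ≤ x) :
    (c₂ / c₁ + c₁ / c₂) * (1 - α / (2 * x)) - (1 - t / (2 * x) ^ α) ^ 2 / (c₁ * c₂) =
      (c₁ ^ 2 + c₂ ^ 2 - 1) / (c₁ * c₂) + 2 ^ (1 - α) / (c₁ * c₂) * t * x ^ (-α) -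
        2 ^ (-(2 * α)) / (c₁ * c₂) * t ^ 2 * x ^ (-(2 * α)) -
        α / x * ((c₁ ^ 2 + c₂ ^ 2) / (2 * c₁ * c₂)) := by
  have hs : t / (2 * x) ^ α = t * 2 ^ (-α) * x ^ (-α) := by
    rw [Real.mul_rpow zero_le_two hx, Real.rpow_neg zero_le_two, Real.rpow_neg hx]
    ring
  have hsq {y : ℝ} (hy : 0 ≤ y) : y ^ (-(2 * α)) = (y ^ (-α)) ^ 2 := by
    rw [← Real.rpow_mul_natCast hy]
    ring_nf
  have htwo : (2 : ℝ) ^ (1 - α) = 2 * 2 ^ (-α) := by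
    rw [sub_eq_add_neg, Real.rpow_add two_pos, Real.rpow_one]
  rw [hs, htwo, hsq zero_le_two, hsq hx]
  field_simp
  ring

theorem jacobiF_uniform_expansion_general {α c₁ c₂ : ℝ} (hα : 0 < α) (hc₁ : c₁ ≠ 0) (hc₂ : c₂ ≠ 0)
    {I : Set ℝ} (hI : Bornology.IsBounded I) :
    OtildeI I
      (fun n t =>
        jacobiF (jacobiWeight α c₁ c₂) (jacobiDiag α) n t -
          ((c₁ ^ 2 + c₂ ^ 2 - 1) / (c₁ * c₂) + 2 ^ (1 - α) / (c₁ * c₂) * t * (n : ℝ) ^ (-α) -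
            2 ^ (-(2 * α)) / (c₁ * c₂) * t ^ 2 * (n : ℝ) ^ (-(2 * α)) -
            α / (n : ℝ) * ((c₁ ^ 2 + c₂ ^ 2) / (2 * c₁ * c₂))))
      (fun n => (n : ℝ) ^ (-1 - min α 1)) := by
  have hdouble : Tendsto (fun n : ℕ => (2 * n : ℝ)) atTop atTop :=
    tendsto_natCast_atTop_atTop.const_mul_atTop two_pos
  have hscale : (fun n : ℕ => (2 * n : ℝ) ^ (-1 - min α 1)) =O[atTop]
      fun n : ℕ => (n : ℝ) ^ (-1 - min α 1) :=
    (isBigO_const_mul_self (2 ^ (-1 - min α 1)) _ _).congr_left fun n =>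
      (Real.mul_rpow zero_le_two n.cast_nonneg).symm
  have hscaled := (isBigO_scaledPoincareCoeff_rpow_sub hα c₁ c₂ hI).comp_tendsto
    (hdouble.prodMap tendsto_id)
  rw [otildeI_iff_isBigO]
  refine (hscaled.congr' ?_ .rfl).trans (hscale.comp_tendsto tendsto_fst)
  filter_upwards [tendsto_fst.eventually_ne_atTop 0] with p hp
  simp only [Function.comp_apply, Prod.map_fst, Prod.map_snd, id_eq]
  rw [jacobiF_jacobiWeight_eq_scaledPoincareCoeff α c₁ c₂ p.2 hp,
    leading_terms_two_mul_eq hc₁ hc₂ α p.2 p.1.cast_nonneg]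

/-- Uniform asymptotic expansion of the Poincaré coefficient `F_n(λ)` in the critical
case `|c₁ − c₂| = 1`. -/
theorem jacobiF_uniform_expansion (α c₁ c₂ : ℝ)
    (hα : α ∈ Set.Ioo (1/3 : ℝ) (1/2)) (hc₁ : 0 < c₁) (hc₂ : 0 < c₂)
    (hcrit : |c₁ - c₂| = 1)
    (I : Set ℝ) (hI : I ⊆ Set.Ioi 0) (hIbdd : Bornology.IsBounded I) :
    OtildeI I
      (fun n t =>
        jacobiF (jacobiWeight α c₁ c₂) (jacobiDiag α) n t -
          (2 + 2 ^ (1 - α) / (c₁ * c₂) * t * (n : ℝ) ^ (-α) -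
            2 ^ (-(2 * α)) / (c₁ * c₂) * t ^ 2 * (n : ℝ) ^ (-(2 * α)) -
            α / (n : ℝ) * (1 + 1 / (2 * c₁ * c₂))))
      (fun n => (n : ℝ) ^ (-1 - α)) := by
  simpa only [sq_add_sq_sub_one_div_mul_of_abs_sub_eq_one hc₁.ne' hc₂.ne' hcrit,
    sq_add_sq_div_two_mul_of_abs_sub_eq_one hc₁.ne' hc₂.ne' hcrit,
    min_eq_left (by linarith [hα.2] : α ≤ 1)] using
    jacobiF_uniform_expansion_general (show 0 < α by linarith [hα.1]) hc₁.ne' hc₂.ne' hIbdd
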